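/- Assume M > N and Q ≤ M. Let σ : ℝ^M → ℝ^M be a map for which there exist a point z ∈ ℝ^M and an open neighborhood U of z such that σ restricted to U is injective and σ(U) is open. Let X⁰ ∈ ℝ^{M×N} be a data matrix of rank N (generic training data), and let Y ∈ ℝ^{Q×N} be the target output matrix. Then for every number of hidden layers L ≥ 0 there exist weight matrices W_1, …, W_L ∈ ℝ^{M×M}, W_{L+1} ∈ ℝ^{Q×M} and bias vectors b_1, …, b_L ∈ ℝ^M, b_{L+1} ∈ ℝ^Q such that, defining recursively X^{(ℓ)}_i = σ(W_ℓ X^{(ℓ−1)}_i + b_ℓ) for ℓ = 1, …, L (where X^{(0)}_i is the i-th column of X⁰), one has W_{L+1} X^{(L)}_i + b_{L+1} = Y_i for every i = 1, …, N, where Y_i is the i-th column of Y. That is, the deep network achieves exactly zero ℒ² loss. -/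

import Mathlib

/-!
A layer's weight and bias together form an arbitrary affine map, and an affine map can be
prescribed freely on an affinely independent family. The range of `σ` contains an affinely
independent family `p` as large as the data set, so the first hidden layer can send the data to
`p`, every further hidden layer can fix `p` pointwise, and the output layer can send `p` to the
targets. For `L = 0` the output layer acts on the data directly.
-/

open Matrix

/-- Hidden-layer recursion: `fwd M σ W b ℓ x` is the output `X^{(ℓ)}` of the `ℓ`-th hidden
layer on input `x = X^{(0)}`, where `W ℓ`, `b ℓ` (0-based) are the weight and bias of the
`(ℓ+1)`-st hidden layer. -/
def fwd (M : ℕ) (σ : (Fin M → ℝ) → Fin M → ℝ)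
    (W : ℕ → Matrix (Fin M) (Fin M) ℝ) (b : ℕ → Fin M → ℝ) :
    ℕ → (Fin M → ℝ) → Fin M → ℝ
  | 0, x => x
  | ℓ + 1, x => σ ((W ℓ).mulVec (fwd M σ W b ℓ x) + b ℓ)

section AffineIndependence

variable {k V P ι : Type*} [DivisionRing k] [AddCommGroup V] [Module k V] [AddTorsor V P]

theorem exists_linearMap_apply_eq_of_linearIndependent {V₂ : Type*} [AddCommGroup V₂]
    [Module k V₂] {v : ι → V} (hv : LinearIndependent k v) (w : ι → V₂) :
    ∃ f : V →ₗ[k] V₂, ∀ i, f (v i) = w i := by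
  obtain ⟨f, hf⟩ := LinearMap.exists_extend ((Module.Basis.span hv).constr ℕ w)
  refine ⟨f, fun i => ?_⟩
  calc f (v i) = (f ∘ₗ (Submodule.span k (Set.range v)).subtype) (Module.Basis.span hv i) := by
        rw [LinearMap.comp_apply, Submodule.subtype_apply, Module.Basis.span_apply]
    _ = w i := by rw [hf, Module.Basis.constr_basis]

theorem exists_affineMap_apply_eq_of_affineIndependent {V₂ P₂ : Type*} [AddCommGroup V₂]
    [Module k V₂] [AddTorsor V₂ P₂] {p : ι → P} (hp : AffineIndependent k p) (q : ι → P₂) :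
    ∃ f : P →ᵃ[k] P₂, ∀ i, f (p i) = q i := by
  rcases isEmpty_or_nonempty ι with hι | ⟨⟨i₀⟩⟩
  · exact ⟨AffineMap.const k P (Classical.arbitrary P₂), fun i => hι.elim i⟩
  obtain ⟨f, hf⟩ := exists_linearMap_apply_eq_of_linearIndependent
    ((affineIndependent_iff_linearIndependent_vsub k p i₀).mp hp) fun i => q i -ᵥ q i₀
  refine ⟨AffineMap.mk' (fun x => f (x -ᵥ p i₀) +ᵥ q i₀) f (p i₀) (by simp), fun i => ?_⟩
  by_cases hi : i = i₀
  · simp [hi]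
  · simp [hf ⟨i, hi⟩]

theorem exists_affineIndependent_mem_of_card_le_finrank_vectorSpan [FiniteDimensional k V]
    [Fintype ι] {s : Set P} (hs : s.Nonempty)
    (hcard : Fintype.card ι ≤ Module.finrank k (vectorSpan k s) + 1) :
    ∃ p : ι → P, AffineIndependent k p ∧ ∀ i, p i ∈ s := by
  obtain ⟨t, hts, hspan, ht⟩ := exists_affineIndependent k V s
  have : Nonempty t :=
    ((affineSpan_nonempty k).mp (hspan ▸ (affineSpan_nonempty k).mpr hs)).to_subtype
  have : Fintype t := @Fintype.ofFinite t (finite_set_of_fin_dim_affineIndependent k ht)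
  have hcard_t : Module.finrank k (vectorSpan k s) + 1 = Fintype.card t := by
    rw [← ht.finrank_vectorSpan_add_one, Subtype.range_coe, ← direction_affineSpan,
      ← direction_affineSpan, hspan]
  obtain ⟨e⟩ := Function.Embedding.nonempty_of_card_le (hcard.trans_eq hcard_t)
  exact ⟨fun i => e i, ht.comp_embedding e, fun i => hts (e i).2⟩

end AffineIndependence

theorem finrank_vectorSpan_eq_of_isOpen_subset {V : Type*} [NormedAddCommGroup V]
    [NormedSpace ℝ V] {s t : Set V} (hs : IsOpen s) (hne : s.Nonempty) (hst : s ⊆ t) :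
    Module.finrank ℝ (vectorSpan ℝ t) = Module.finrank ℝ V := by
  have hspan_s : vectorSpan ℝ s = ⊤ :=
    AffineSubspace.vectorSpan_eq_top_of_affineSpan_eq_top ℝ V V (hs.affineSpan_eq_top hne)
  have hspan_t : vectorSpan ℝ t = ⊤ := top_unique (hspan_s ▸ vectorSpan_mono ℝ hst)
  rw [hspan_t, finrank_top]

theorem linearIndependent_col_of_rank_eq_card {K m n : Type*} [Field K] [Fintype n]
    {A : Matrix m n K} (hA : A.rank = Fintype.card n) : LinearIndependent K A.col := by
  rw [linearIndependent_iff_card_eq_finrank_span, Set.finrank, ← A.rank_eq_finrank_span_cols, hA]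

theorem exists_mulVec_add_eq_of_affineIndependent {K ι m n : Type*} [Field K] [Fintype n]
    {x : ι → n → K} (hx : AffineIndependent K x) (y : ι → m → K) :
    ∃ (A : Matrix m n K) (b : m → K), ∀ i, A *ᵥ x i + b = y i := by
  classical
  obtain ⟨f, hf⟩ := exists_affineMap_apply_eq_of_affineIndependent hx y
  refine ⟨LinearMap.toMatrix' f.linear, f 0, fun i => ?_⟩
  rw [LinearMap.toMatrix'_mulVec, ← hf, f.decomp]
  simp

section Network

variable {M : ℕ} {ι : Type*} (σ : (Fin M → ℝ) → Fin M → ℝ)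

theorem exists_fwd_eq_of_affineIndependent (x : ℕ → ι → Fin M → ℝ)
    (hx : ∀ ℓ, AffineIndependent ℝ (x ℓ)) (hσ : ∀ ℓ i, x (ℓ + 1) i ∈ Set.range σ) :
    ∃ (W : ℕ → Matrix (Fin M) (Fin M) ℝ) (b : ℕ → Fin M → ℝ),
      ∀ ℓ i, fwd M σ W b ℓ (x 0 i) = x ℓ i := by
  choose v hv using hσ
  choose W b hWb using fun ℓ => exists_mulVec_add_eq_of_affineIndependent (hx ℓ) (v ℓ)
  refine ⟨W, b, fun ℓ i => ?_⟩
  induction ℓ with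
  | zero => rw [fwd]
  | succ ℓ ih => rw [fwd, ih, hWb, hv]

theorem deep_network_zero_loss_general {κ : Type*} [Fintype ι]
    (hσ : Fintype.card ι ≤ Module.finrank ℝ (vectorSpan ℝ (Set.range σ)) + 1)
    {x : ι → Fin M → ℝ} (hx : AffineIndependent ℝ x) (y : ι → κ → ℝ) (L : ℕ) :
    ∃ (W : ℕ → Matrix (Fin M) (Fin M) ℝ) (b : ℕ → Fin M → ℝ)
      (Wout : Matrix κ (Fin M) ℝ) (bout : κ → ℝ),
      ∀ i, Wout *ᵥ fwd M σ W b L (x i) + bout = y i := by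
  obtain ⟨p, hp, hpσ⟩ :=
    exists_affineIndependent_mem_of_card_le_finrank_vectorSpan (Set.range_nonempty σ) hσ
  let layer : ℕ → ι → Fin M → ℝ
    | 0 => x
    | _ + 1 => p
  have hlayer : ∀ ℓ, AffineIndependent ℝ (layer ℓ)
    | 0 => hx
    | _ + 1 => hp
  obtain ⟨W, b, hfwd⟩ := exists_fwd_eq_of_affineIndependent σ layer hlayer fun _ => hpσ
  obtain ⟨Wout, bout, hout⟩ := exists_mulVec_add_eq_of_affineIndependent (hlayer L) y
  exact ⟨W, b, Wout, bout, fun i => (hfwd L i).symm ▸ hout i⟩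

end Network

theorem deep_network_zero_loss {M N Q : ℕ} (hMN : N < M) (hQM : Q ≤ M)
    (σ : (Fin M → ℝ) → Fin M → ℝ)
    (z : Fin M → ℝ) (U : Set (Fin M → ℝ)) (hU : IsOpen U) (hz : z ∈ U)
    (hinj : Set.InjOn σ U) (hopen : IsOpen (σ '' U))
    (X0 : Matrix (Fin M) (Fin N) ℝ) (hrank : X0.rank = N)
    (Y : Matrix (Fin Q) (Fin N) ℝ) (L : ℕ) :
    ∃ (W : ℕ → Matrix (Fin M) (Fin M) ℝ) (b : ℕ → Fin M → ℝ)
      (Wout : Matrix (Fin Q) (Fin M) ℝ) (bout : Fin Q → ℝ),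
      ∀ i : Fin N,
        Wout.mulVec (fwd M σ W b L (fun j => X0 j i)) + bout = fun q => Y q i := by
  have hσ : Module.finrank ℝ (vectorSpan ℝ (Set.range σ)) = M := by
    simpa using finrank_vectorSpan_eq_of_isOpen_subset hopen ⟨σ z, z, hz, rfl⟩
      (Set.image_subset_range σ U)
  have hX : LinearIndependent ℝ X0.col := linearIndependent_col_of_rank_eq_card (by simpa)
  exact deep_network_zero_loss_general σ (by rw [hσ, Fintype.card_fin]; lia)
    hX.affineIndependent Y.col L
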